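/- arXiv:2407.07738 — 2 statements merged into one kernel-verified Lean document; each statement's English description precedes it below -/
import Mathlib

section
/- Let I ⊆ ℝ be an open interval and let a : I → ℝ² be a smooth spacelike frontal with frame: smooth maps ν, μ : I → ℝ² and a smooth function β : I → ℝ such that ⟨ν, ν⟩ ≡ -1, ⟨μ, μ⟩ ≡ 1, ⟨μ, ν⟩ ≡ 0 and a'(t) = β(t)μ(t) for all t ∈ I; let r : I → ℝ be a smooth positive function. If f : I → ℝ² is an envelope of the pseudo-circle family C(a(t), r(t)), then for every t ∈ I there exist θ ∈ ℝ and ε ∈ {-1, 1} such that f(t) = a(t) + r(t)·(ε·cosh(θ)·μ(t) + sinh(θ)·ν(t)) and r'(t) + ε·β(t)·cosh(θ) = 0. -/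
/-!
At each `t ∈ I` the vectors `μ t`, `ν t` form a pseudo-orthonormal frame, so `g = f t - a t` expands
as `⟨g, μ⟩ μ - ⟨g, ν⟩ ν` (`mink_frame_expansion`). The condition `⟨g, g⟩ = r²` puts the coordinates
of `g / r` on the hyperbola `p² - q² = 1`, which is parametrized by `(ε cosh θ, sinh θ)` with
`ε` selecting the branch (`exists_hyperbolic_angle`). Differentiating `⟨f - a, f - a⟩ = r²` and using
`⟨f', f - a⟩ = 0` leaves `-⟨a', f - a⟩ = r r'`; since `a' = β μ` this is `-β r p = r r'`, and
dividing by `r > 0` gives the second identity.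
-/

open Real Set

noncomputable def mink (x y : ℝ × ℝ) : ℝ := -(x.1 * y.1) + x.2 * y.2

/-- `f` is an envelope of the pseudo-circle family `C(a(t), +r(t))` on `I`. -/
def IsEnvelopePos (I : Set ℝ) (a : ℝ → ℝ × ℝ) (r : ℝ → ℝ) (f : ℝ → ℝ × ℝ) : Prop :=
  ContDiffOn ℝ (⊤ : ℕ∞) f I ∧
    ∀ t ∈ I, mink (f t - a t) (f t - a t) = (r t) ^ 2 ∧ mink (deriv f t) (f t - a t) = 0

/-- The expansion of a vector in a pseudo-orthonormal frame. The coordinate along the timelike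
vector `n` carries a minus sign because `mink n n = -1`. -/
lemma mink_frame_expansion {m n : ℝ × ℝ} (hn : mink n n = -1) (hm : mink m m = 1)
    (hmn : mink m n = 0) (g : ℝ × ℝ) :
    g = mink g m • m + (-mink g n) • n := by
  obtain ⟨m1, m2⟩ := m
  obtain ⟨n1, n2⟩ := n
  obtain ⟨g1, g2⟩ := g
  simp only [mink] at *
  -- Orthogonality to `m` forces `n = d • (m2, m1)` for the determinant `d`, and `d ^ 2 = 1`.
  obtain ⟨d, hd⟩ : ∃ d, d = n1 * m2 - m1 * n2 := ⟨_, rfl⟩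
  have h1 : n1 = d * m2 := by rw [hd]; linear_combination -n1 * hm + m1 * hmn
  have h2 : n2 = d * m1 := by rw [hd]; linear_combination -n2 * hm + m2 * hmn
  have hd2 : d ^ 2 = 1 := by
    rw [h1, h2] at hn
    linear_combination -hn - d ^ 2 * hm
  rw [h1, h2]
  ext
  · simp only [Prod.fst_add, Prod.smul_fst, smul_eq_mul]
    linear_combination (-g1) * hm - (g1 * m2 ^ 2 - g2 * m1 * m2) * hd2
  · simp only [Prod.snd_add, Prod.smul_snd, smul_eq_mul]
    linear_combination (-g2) * hm - (g1 * m1 * m2 - g2 * m1 ^ 2) * hd2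

/-- The two branches of the unit hyperbola are parametrized by `(± cosh θ, sinh θ)`. -/
lemma exists_hyperbolic_angle {p q : ℝ} (h : p ^ 2 - q ^ 2 = 1) :
    ∃ θ ε : ℝ, (ε = 1 ∨ ε = -1) ∧ p = ε * Real.cosh θ ∧ q = Real.sinh θ := by
  have hc : Real.cosh (Real.arsinh q) = |p| := by
    rw [Real.cosh_arsinh, ← Real.sqrt_sq_eq_abs]
    congr 1
    linarith
  rcases le_total 0 p with hp | hp
  · exact ⟨Real.arsinh q, 1, Or.inl rfl, by rw [hc, abs_of_nonneg hp, one_mul],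
      (Real.sinh_arsinh q).symm⟩
  · exact ⟨Real.arsinh q, -1, Or.inr rfl, by rw [hc, abs_of_nonpos hp]; ring,
      (Real.sinh_arsinh q).symm⟩

lemma hasDerivAt_mink_self {g : ℝ → ℝ × ℝ} {g' : ℝ × ℝ} {t : ℝ} (hg : HasDerivAt g g' t) :
    HasDerivAt (fun s => mink (g s) (g s)) (2 * mink g' (g t)) t := by
  have h1 : HasDerivAt (fun s => (g s).1) g'.1 t :=
    (ContinuousLinearMap.fst ℝ ℝ ℝ).hasFDerivAt.comp_hasDerivAt t hg
  have h2 : HasDerivAt (fun s => (g s).2) g'.2 t :=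
    (ContinuousLinearMap.snd ℝ ℝ ℝ).hasFDerivAt.comp_hasDerivAt t hg
  have h := (h1.mul h1).neg.add (h2.mul h2)
  exact h.congr_deriv (by unfold mink; ring)

theorem envelope_representation_spacelike
    (I : Set ℝ) (hIopen : IsOpen I) (hIconn : I.OrdConnected)
    (a ν μ : ℝ → ℝ × ℝ) (β r : ℝ → ℝ)
    (hs0 : ContDiffOn ℝ (⊤ : ℕ∞) a I)
    (hs1 : ContDiffOn ℝ (⊤ : ℕ∞) ν I)
    (hs2 : ContDiffOn ℝ (⊤ : ℕ∞) μ I)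
    (hs3 : ContDiffOn ℝ (⊤ : ℕ∞) β I)
    (hs4 : ContDiffOn ℝ (⊤ : ℕ∞) r I)
    (hνν : ∀ t ∈ I, mink (ν t) (ν t) = -1)
    (hμμ : ∀ t ∈ I, mink (μ t) (μ t) = 1)
    (hμν : ∀ t ∈ I, mink (μ t) (ν t) = 0)
    (hderiv : ∀ t ∈ I, deriv a t = β t • μ t)
    (hrpos : ∀ t ∈ I, 0 < r t)
    (f : ℝ → ℝ × ℝ)
    (hf : IsEnvelopePos I a r f) :
    ∀ t ∈ I, ∃ θ ε : ℝ, (ε = 1 ∨ ε = -1) ∧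
      f t = a t + r t • ((ε * Real.cosh θ) • μ t + Real.sinh θ • ν t) ∧
      deriv r t + ε * β t * Real.cosh θ = 0 := by
  intro t ht
  obtain ⟨hfs, hfe⟩ := hf
  have hI : I ∈ nhds t := hIopen.mem_nhds ht
  have hda : HasDerivAt a (deriv a t) t :=
    ((hs0.contDiffAt hI).differentiableAt (by simp)).hasDerivAt
  have hdf : HasDerivAt f (deriv f t) t :=
    ((hfs.contDiffAt hI).differentiableAt (by simp)).hasDerivAt
  have hdr : HasDerivAt r (deriv r t) t :=
    ((hs4.contDiffAt hI).differentiableAt (by simp)).hasDerivAt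
  have hr := hrpos t ht
  obtain ⟨hrad, htan⟩ := hfe t ht
  have hdiff : 2 * mink (deriv f t - deriv a t) (f t - a t) = 2 * r t * deriv r t := by
    have h1 := hasDerivAt_mink_self (hdf.sub hda)
    have h2 := hdr.pow 2
    have heq : (fun s => mink ((f - a) s) ((f - a) s)) =ᶠ[nhds t] r ^ 2 := by
      filter_upwards [hI] with s hs using (hfe s hs).1
    simpa using h1.unique (h2.congr_of_eventuallyEq heq)
  rw [hderiv t ht] at hdiff
  have hμμt := hμμ t ht
  have hννt := hνν t ht
  have hμνt := hμν t ht
  have hexp := mink_frame_expansion hννt hμμt hμνt (f t - a t)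
  obtain ⟨P, hP⟩ : ∃ P, P = mink (f t - a t) (μ t) := ⟨_, rfl⟩
  obtain ⟨Q, hQ⟩ : ∃ Q, Q = -mink (f t - a t) (ν t) := ⟨_, rfl⟩
  rw [← hP, ← hQ] at hexp
  have hPQ : (P / r t) ^ 2 - (Q / r t) ^ 2 = 1 := by
    rw [hexp] at hrad
    field_simp
    simp only [mink, Prod.fst_add, Prod.snd_add, Prod.smul_fst, Prod.smul_snd, smul_eq_mul]
      at hrad hμμt hννt hμνt
    linear_combination hrad - P ^ 2 * hμμt - Q ^ 2 * hννt - 2 * P * Q * hμνt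
  obtain ⟨θ, ε, hε, hp, hq⟩ := exists_hyperbolic_angle hPQ
  refine ⟨θ, ε, hε, ?_, ?_⟩
  · rw [← hp, ← hq, smul_add, smul_smul, smul_smul, mul_div_cancel₀ _ hr.ne',
      mul_div_cancel₀ _ hr.ne', ← hexp]
    abel
  · have hβ : r t * deriv r t + β t * P = 0 := by
      rw [hP]
      simp only [mink, Prod.fst_sub, Prod.snd_sub, Prod.smul_fst, Prod.smul_snd, smul_eq_mul]
        at hdiff htan ⊢
      linear_combination htan - hdiff / 2
    rw [mul_right_comm, ← hp]
    field_simp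
    linear_combination hβ
end

section
/- Let I ⊆ ℝ be an open interval, a : I → ℝ² a smooth timelike frontal with frame ν, μ : I → ℝ² (smooth, ⟨ν, ν⟩ ≡ 1, ⟨μ, μ⟩ ≡ -1, ⟨μ, ν⟩ ≡ 0) and smooth β : I → ℝ with a'(t) = β(t)μ(t), and r : I → ℝ a smooth positive function. Suppose the pseudo-circle family C(a(t), r(t)) creates at least one envelope. Then the set of envelopes of C(a(t), r(t)) is uncountable if and only if the set {t ∈ I : β(t) ≠ 0} is not dense in I. -/
/-!
Write `w = f - a`. Differentiating `⟨w, w⟩ = r²` turns the envelope condition `⟨f', w⟩ = 0` into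
`⟨a', w⟩ = -r r'`, that is `β ⟨μ, w⟩ = -r r'`, which is pointwise in `w`.

If `β ≠ 0` on a dense subset of `I`, this determines the continuous function `⟨μ, w⟩`. Since
`⟨ν, w⟩² = r² + ⟨μ, w⟩² > 0` on the connected set `I`, the function `⟨ν, w⟩` is determined by its
sign at one point, so there are at most two envelopes.

If `β` vanishes near some `t₀ ∈ I`, then `a' = 0` and hence `r r' = 0` there. Given an envelope and
a bump function `φ` supported near `t₀`, rotating `w` hyperbolically by the angle `s φ` gives
another envelope for each real `s`. The light-cone coordinate `w₁ + w₂` gets multiplied by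
`exp (s φ)`, so distinct `s` give distinct envelopes.
-/

open Real Set

/-- The set of envelopes of the family `C(a(t), +r(t))`, regarded as maps `I → ℝ²`. -/
def EnvSetPos (I : Set ℝ) (a : ℝ → ℝ × ℝ) (r : ℝ → ℝ) : Set (I → ℝ × ℝ) :=
  {g | ∃ f : ℝ → ℝ × ℝ, IsEnvelopePos I a r f ∧ g = I.restrict f}

lemma continuousOn_mink {S : Set ℝ} {u v : ℝ → ℝ × ℝ} (hu : ContinuousOn u S)
    (hv : ContinuousOn v S) : ContinuousOn (fun t => mink (u t) (v t)) S := by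
  unfold mink; fun_prop

/-- For a curve `f` with `f t` on the circle `C(a(t), r(t))`, tangency is a condition on the position
`f t - a t` alone: the derivative of `f` drops out. -/
lemma tangency_iff {I : Set ℝ} (hI : IsOpen I) {f a : ℝ → ℝ × ℝ} {r : ℝ → ℝ}
    (hf : ContDiffOn ℝ (⊤ : ℕ∞) f I) (ha : ContDiffOn ℝ (⊤ : ℕ∞) a I)
    (hr : ContDiffOn ℝ (⊤ : ℕ∞) r I)
    (h : ∀ t ∈ I, mink (f t - a t) (f t - a t) = r t ^ 2) {t : ℝ} (ht : t ∈ I) :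
    mink (deriv f t) (f t - a t) = 0 ↔ mink (deriv a t) (f t - a t) = -(r t * deriv r t) := by
  have hn : I ∈ nhds t := hI.mem_nhds ht
  have htop : ((⊤ : ℕ∞) : WithTop ℕ∞) ≠ 0 := by simp
  have df := ((hf.contDiffAt hn).differentiableAt htop).hasDerivAt
  have da := ((ha.contDiffAt hn).differentiableAt htop).hasDerivAt
  have dr := ((hr.contDiffAt hn).differentiableAt htop).hasDerivAt
  have dw1 : HasDerivAt (fun s => (f s - a s).1) (deriv f t - deriv a t).1 t :=
    (df.sub da).fst
  have dw2 : HasDerivAt (fun s => (f s - a s).2) (deriv f t - deriv a t).2 t :=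
    (df.sub da).snd
  have h1 := ((dw1.mul dw1).neg.add (dw2.mul dw2))
  have h2 := (dr.mul dr).congr_of_eventuallyEq (f₁ := fun s => -((f s - a s).1 * (f s - a s).1)
      + (f s - a s).2 * (f s - a s).2) (by
    filter_upwards [hn] with s hs
    have := h s hs
    simp only [mink] at this
    simp only [Pi.mul_apply]
    rw [this]; ring)
  have h3 := HasDerivAt.unique h1 h2
  simp only [mink, Prod.fst_sub, Prod.snd_sub] at h3 ⊢
  constructor <;> intro h4 <;> linarith

/-- The Pythagorean identity in the pseudo-orthonormal frame `(μ, ν)`. -/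
lemma mink_frame {m n w : ℝ × ℝ} (hn : mink n n = 1) (hm : mink m m = -1) (hmn : mink m n = 0) :
    mink n w ^ 2 = mink w w + mink m w ^ 2 := by
  obtain ⟨m1, m2⟩ := m
  obtain ⟨n1, n2⟩ := n
  obtain ⟨w1, w2⟩ := w
  simp only [mink] at *
  -- The vector `m` is `D • (n₂, n₁)`, where `D` is the determinant of the frame.
  obtain ⟨D, hD⟩ : ∃ D, D = m1 * n2 - m2 * n1 := ⟨_, rfl⟩
  have e1 : m1 = D * n2 := by rw [hD]; linear_combination (-m1) * hn + n1 * hmn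
  have e2 : m2 = D * n1 := by rw [hD]; linear_combination (-m2) * hn + n2 * hmn
  subst e1 e2
  have hDD : D ^ 2 = 1 := by linear_combination (-1) * hm - D ^ 2 * hn
  linear_combination (w2 ^ 2 - w1 ^ 2) * hn - (-(n2 * w1) + n1 * w2) ^ 2 * hDD

lemma eq_of_mink_frame {m n v w : ℝ × ℝ} (hn : mink n n = 1) (hm : mink m m = -1)
    (hmn : mink m n = 0) (h1 : mink n v = mink n w) (h2 : mink m v = mink m w) : v = w := by
  obtain ⟨m1, m2⟩ := m
  obtain ⟨n1, n2⟩ := n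
  obtain ⟨v1, v2⟩ := v
  obtain ⟨w1, w2⟩ := w
  simp only [mink] at *
  have hD : (m1 * n2 - m2 * n1) * (m1 * n2 - m2 * n1) = 1 := by
    linear_combination (-(-(n1 * n1) + n2 * n2)) * hm + hn + (-(m1 * n1) + m2 * n2) * hmn
  have hD0 : m1 * n2 - m2 * n1 ≠ 0 := fun h => by rw [h] at hD; norm_num at hD
  ext
  · exact mul_left_cancel₀ hD0 (by linear_combination m2 * h1 - n2 * h2)
  · exact mul_left_cancel₀ hD0 (by linear_combination m1 * h1 - n1 * h2)

/-- The hyperbolic rotation of the Minkowski plane by the angle `s`. -/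
noncomputable def boost (s : ℝ) (w : ℝ × ℝ) : ℝ × ℝ :=
  (cosh s * w.1 + sinh s * w.2, sinh s * w.1 + cosh s * w.2)

lemma mink_boost (s : ℝ) (w : ℝ × ℝ) : mink (boost s w) (boost s w) = mink w w := by
  simp only [mink, boost]
  linear_combination (-(w.1 * w.1) + w.2 * w.2) * cosh_sq s

lemma boost_zero (w : ℝ × ℝ) : boost 0 w = w := by simp [boost]

/-- Boosts of a spacelike vector are distinct, because `w₁ + w₂ ≠ 0` is scaled by `exp s`. -/
lemma boost_injective {w : ℝ × ℝ} (hw : 0 < mink w w) : Function.Injective fun s => boost s w := by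
  intro s s' h
  have key : ∀ u, (boost u w).1 + (boost u w).2 = exp u * (w.1 + w.2) := fun u => by
    simp only [boost]; rw [← cosh_add_sinh]; ring
  have h0 : w.1 + w.2 ≠ 0 := fun h0 => by
    have : mink w w = 0 := by
      simp only [mink]; linear_combination (w.2 - w.1) * h0
    exact hw.ne' this
  have h1 := key s
  rw [show boost s w = boost s' w from h, key s'] at h1
  exact (exp_injective (mul_right_cancel₀ h0 h1)).symm

lemma contDiffOn_boost {I : Set ℝ} {θ : ℝ → ℝ} {w : ℝ → ℝ × ℝ}
    (hθ : ContDiff ℝ (⊤ : ℕ∞) θ) (hw : ContDiffOn ℝ (⊤ : ℕ∞) w I) :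
    ContDiffOn ℝ (⊤ : ℕ∞) (fun t => boost (θ t) (w t)) I := by
  have hc := (Real.contDiff_cosh.comp hθ).contDiffOn (s := I)
  have hs := (Real.contDiff_sinh.comp hθ).contDiffOn (s := I)
  exact ((hc.mul hw.fst).add (hs.mul hw.snd)).prodMk ((hs.mul hw.fst).add (hc.mul hw.snd))

/-- Where `a' = 0` holds on the support of `θ`, boosting an envelope about `a` by the angle `θ`
gives an envelope. -/
lemma IsEnvelopePos.boost {I : Set ℝ} (hI : IsOpen I) {f a : ℝ → ℝ × ℝ} {r θ : ℝ → ℝ}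
    (hf : IsEnvelopePos I a r f) (ha : ContDiffOn ℝ (⊤ : ℕ∞) a I)
    (hr : ContDiffOn ℝ (⊤ : ℕ∞) r I) (hθ : ContDiff ℝ (⊤ : ℕ∞) θ)
    (h0 : ∀ t ∈ I, θ t ≠ 0 → deriv a t = 0) :
    IsEnvelopePos I a r (fun t => a t + _root_.boost (θ t) (f t - a t)) := by
  have hsm := ha.add (contDiffOn_boost hθ (hf.1.sub ha))
  have hcirc : ∀ t ∈ I, mink (a t + _root_.boost (θ t) (f t - a t) - a t)
      (a t + _root_.boost (θ t) (f t - a t) - a t) = r t ^ 2 := fun t ht => by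
    rw [add_sub_cancel_left, mink_boost, (hf.2 t ht).1]
  refine ⟨hsm, fun t ht => ⟨hcirc t ht, ?_⟩⟩
  refine (tangency_iff hI hsm ha hr hcirc ht).2 ?_
  have hold := (tangency_iff hI hf.1 ha hr (fun t ht => (hf.2 t ht).1) ht).1 (hf.2 t ht).2
  simp only [add_sub_cancel_left]
  by_cases h : θ t = 0
  · rw [h, boost_zero, hold]
  · rw [← hold, h0 t ht h]; simp [mink]

theorem uncountably_many_envelopes_iff_timelike
    (I : Set ℝ) (hIopen : IsOpen I) (hIconn : I.OrdConnected)
    (a ν μ : ℝ → ℝ × ℝ) (β r : ℝ → ℝ)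
    (hs0 : ContDiffOn ℝ (⊤ : ℕ∞) a I)
    (hs1 : ContDiffOn ℝ (⊤ : ℕ∞) ν I)
    (hs2 : ContDiffOn ℝ (⊤ : ℕ∞) μ I)
    (hs3 : ContDiffOn ℝ (⊤ : ℕ∞) β I)
    (hs4 : ContDiffOn ℝ (⊤ : ℕ∞) r I)
    (hνν : ∀ t ∈ I, mink (ν t) (ν t) = 1)
    (hμμ : ∀ t ∈ I, mink (μ t) (μ t) = -1)
    (hμν : ∀ t ∈ I, mink (μ t) (ν t) = 0)
    (hderiv : ∀ t ∈ I, deriv a t = β t • μ t)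
    (hrpos : ∀ t ∈ I, 0 < r t)
    (hex : ∃ f : ℝ → ℝ × ℝ, IsEnvelopePos I a r f) :
    ¬ (EnvSetPos I a r).Countable ↔ ¬ I ⊆ closure {t | t ∈ I ∧ β t ≠ 0} := by
  refine not_congr ⟨fun hcount => ?_, fun hdense => ?_⟩
  · by_contra hd
    obtain ⟨t₀, ht₀, hcl⟩ := not_subset.1 hd
    obtain ⟨f, hf⟩ := hex
    obtain ⟨φ, hsupp, -, hφ, -, hφ1⟩ := exists_contDiff_tsupport_subset (n := ⊤)
      (isClosed_closure.isOpen_compl.mem_nhds hcl)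
    have henv : ∀ s : ℝ, IsEnvelopePos I a r
        (fun t => a t + boost (s * φ t) (f t - a t)) := fun s => by
      refine hf.boost hIopen hs0 hs4 (contDiff_const.mul hφ) fun t ht hne => ?_
      have h1 : t ∉ closure {t | t ∈ I ∧ β t ≠ 0} :=
        hsupp (subset_tsupport _ (right_ne_zero_of_mul hne))
      have h2 : β t = 0 := by
        by_contra hβ
        exact h1 (subset_closure ⟨ht, hβ⟩)
      rw [hderiv t ht, h2, zero_smul]
    have hw : 0 < mink (f t₀ - a t₀) (f t₀ - a t₀) := by
      rw [(hf.2 t₀ ht₀).1]; exact pow_pos (hrpos t₀ ht₀) 2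
    refine not_countable_univ (α := ℝ) (MapsTo.countable_of_injOn (t := EnvSetPos I a r)
      (f := fun s => I.domRestrict fun t => a t + boost (s * φ t) (f t - a t))
      (fun s _ => ⟨_, henv s, rfl⟩) (fun s _ s' _ h => ?_) hcount)
    have h1 := congrFun h ⟨t₀, ht₀⟩
    simp only [Set.domRestrict_apply, hφ1, mul_one] at h1
    exact boost_injective hw (add_left_cancel h1)
  · rcases I.eq_empty_or_nonempty with rfl | ⟨t₀, ht₀⟩
    · exact to_countable _
    refine MapsTo.countable_of_injOn (t := (univ : Set Prop))
      (f := fun g => 0 < mink (ν t₀) (g ⟨t₀, ht₀⟩ - a t₀)) (fun _ _ => mem_univ _) ?_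
      (to_countable _)
    rintro _ ⟨f, hf, rfl⟩ _ ⟨g, hg, rfl⟩ hfg
    replace hfg : 0 < mink (ν t₀) (f t₀ - a t₀) ↔ 0 < mink (ν t₀) (g t₀ - a t₀) := eq_iff_iff.1 hfg
    have ca := hs0.continuousOn
    have cf := hf.1.continuousOn.sub ca
    have cg := hg.1.continuousOn.sub ca
    have hμ : ∀ t ∈ I, mink (μ t) (f t - a t) = mink (μ t) (g t - a t) := by
      refine EqOn.of_subset_closure (s := {t | t ∈ I ∧ β t ≠ 0}) ?_
        (continuousOn_mink hs2.continuousOn cf) (continuousOn_mink hs2.continuousOn cg)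
        (fun t ht => ht.1) hdense
      rintro t ⟨ht, hβ⟩
      have e1 := (tangency_iff hIopen hf.1 hs0 hs4 (fun t ht => (hf.2 t ht).1) ht).1 (hf.2 t ht).2
      have e2 := (tangency_iff hIopen hg.1 hs0 hs4 (fun t ht => (hg.2 t ht).1) ht).1 (hg.2 t ht).2
      rw [hderiv t ht] at e1 e2
      simp only [mink, Prod.smul_fst, Prod.smul_snd, smul_eq_mul] at e1 e2 ⊢
      exact mul_left_cancel₀ hβ (by linear_combination e1 - e2)
    have hsq : ∀ t ∈ I, mink (ν t) (f t - a t) ^ 2 = mink (ν t) (g t - a t) ^ 2 := fun t ht => by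
      rw [mink_frame (hνν t ht) (hμμ t ht) (hμν t ht), mink_frame (hνν t ht) (hμμ t ht) (hμν t ht),
        (hf.2 t ht).1, (hg.2 t ht).1, hμ t ht]
    have hne : ∀ t ∈ I, mink (ν t) (g t - a t) ≠ 0 := fun t ht h => by
      have e := mink_frame (w := g t - a t) (hνν t ht) (hμμ t ht) (hμν t ht)
      rw [(hg.2 t ht).1, h] at e
      have := hrpos t ht
      have : 0 < r t ^ 2 + mink (μ t) (g t - a t) ^ 2 := by positivity
      linarith
    have h₀ : mink (ν t₀) (f t₀ - a t₀) = mink (ν t₀) (g t₀ - a t₀) := by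
      rcases sq_eq_sq_iff_eq_or_eq_neg.1 (hsq t₀ ht₀) with h | h
      · exact h
      · rw [h] at hfg
        rcases lt_or_gt_of_ne (hne t₀ ht₀) with h' | h'
        · linarith [hfg.1 (by linarith)]
        · linarith [hfg.2 h']
    have hν := hIconn.isPreconnected.eq_of_sq_eq (continuousOn_mink hs1.continuousOn cf)
      (continuousOn_mink hs1.continuousOn cg) hsq (fun {t} ht => hne t ht) ht₀ h₀
    funext ⟨t, ht⟩
    exact sub_left_injective (eq_of_mink_frame (hνν t ht) (hμμ t ht) (hμν t ht) (hν ht) (hμ t ht))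
end
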